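/- The term mult = λx.λy.iter x !(λw.sum !̄y w) §0̄, where sum = λw.λz.λx.§(λy.§̄(w x)(§̄(z x) y)) and iter = λx.λy.λz.§(§̄(x y) §̄z), is typable as ⊢ mult : Int ⊸ !Int ⊸ §Int, and for all natural numbers m and n, mult m̄ !n̄ ⇝* §(m·n)̄. -/

import Mathlib

/-!
Typability: the derivations follow the structure of the terms. `iter` and `sum` each come from a
`§`-box around an application (resp. a composition) of variables, whose `§`-assumptions are then
fed by `⊸`-left from the instantiated integers; in `sum` the two copies of the successor argument
are contracted. `mult` iterates, at type `Int`, the step function `λw.sum !̄y w`, which has the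
single free variable `y : Int` and hence may be boxed by the `!`-rule.

Correctness: `m̄ !F` unfolds to `§` of the `m`-fold composition of `F`, where `F` is the function
`w ↦ sum n̄ w`, so that `mult m̄ !n̄` reduces to `§` of `F` applied `m` times to `0̄`
(`mult_unfold`). Since `sum n̄ k̄ ⇝* (n+k)̄` (`sum_steps`), induction on `m`
yields `(m·n)̄`. The only syntactic facts needed are how lifting and substitution act on iterated
applications `f (… (f b))`, in particular that numerals are closed.
-/

/-- Formulas of Intuitionistic Light Affine Logic (ILAL), with de Bruijn indices for the
propositional variables: `A ::= α | A ⊸ A | A ⊗ A | !A | §A | ∀α.A`. -/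
inductive Fm : Type
  | var : ℕ → Fm
  | limp : Fm → Fm → Fm
  | tens : Fm → Fm → Fm
  | bang : Fm → Fm
  | sect : Fm → Fm
  | all : Fm → Fm
deriving DecidableEq

/-- Lift the propositional variables `≥ c` by one. -/
def Fm.lift (c : ℕ) : Fm → Fm
  | .var n => if n < c then .var n else .var (n + 1)
  | .limp a b => .limp (a.lift c) (b.lift c)
  | .tens a b => .tens (a.lift c) (b.lift c)
  | .bang a => .bang (a.lift c)
  | .sect a => .sect (a.lift c)
  | .all a => .all (a.lift (c + 1))

/-- `Fm.subst c B A` is `A[B/α_c]`. -/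
def Fm.subst : ℕ → Fm → Fm → Fm
  | c, B, .var n => if n < c then .var n else if n = c then B else .var (n - 1)
  | c, B, .limp a b => .limp (Fm.subst c B a) (Fm.subst c B b)
  | c, B, .tens a b => .tens (Fm.subst c B a) (Fm.subst c B b)
  | c, B, .bang a => .bang (Fm.subst c B a)
  | c, B, .sect a => .sect (Fm.subst c B a)
  | c, B, .all a => .all (Fm.subst (c + 1) (B.lift 0) a)

/-- Patterns of the concrete syntax `Λ`: `P ::= x | P ⊗ P`. -/
inductive Pat : Type
  | pvar : Pat
  | ptens : Pat → Pat → Pat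
deriving DecidableEq

/-- Number of variables bound by a pattern. -/
def Pat.size : Pat → ℕ
  | .pvar => 1
  | .ptens p q => p.size + q.size

/-- Terms of the concrete syntax `Λ`, with de Bruijn indices (a `λ` with pattern `p`
binds `p.size` consecutive indices, the leftmost pattern variable being index `0`):
`M ::= x | λP.M | (M N) | M ⊗ N | !M | !̄M | §M | §̄M`.  De Bruijn representation makes
terms into canonical representatives of their `α`-equivalence classes. -/
inductive Tm : Type
  | bvar : ℕ → Tm
  | lam : Pat → Tm → Tm
  | app : Tm → Tm → Tm
  | tens : Tm → Tm → Tm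
  | bang : Tm → Tm
  | unbang : Tm → Tm
  | sect : Tm → Tm
  | unsect : Tm → Tm
deriving DecidableEq

/-- Lift the term variables `≥ c` by `d`. -/
def Tm.lift (c d : ℕ) : Tm → Tm
  | .bvar n => if n < c then .bvar n else .bvar (n + d)
  | .lam p t => .lam p (t.lift (c + p.size) d)
  | .app a b => .app (a.lift c d) (b.lift c d)
  | .tens a b => .tens (a.lift c d) (b.lift c d)
  | .bang a => .bang (a.lift c d)
  | .unbang a => .unbang (a.lift c d)
  | .sect a => .sect (a.lift c d)
  | .unsect a => .unsect (a.lift c d)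

/-- Capture-avoiding simultaneous substitution of the list `σ` for the term variables
`c, c+1, …, c + σ.length − 1`, decrementing the higher variables by `σ.length`. -/
def Tm.subst : ℕ → List Tm → Tm → Tm
  | c, σ, .bvar n =>
      if n < c then .bvar n
      else Tm.lift 0 c (σ.getD (n - c) (.bvar (n - c - σ.length)))
  | c, σ, .lam p t => .lam p (Tm.subst (c + p.size) σ t)
  | c, σ, .app a b => .app (Tm.subst c σ a) (Tm.subst c σ b)
  | c, σ, .tens a b => .tens (Tm.subst c σ a) (Tm.subst c σ b)
  | c, σ, .bang a => .bang (Tm.subst c σ a)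
  | c, σ, .unbang a => .unbang (Tm.subst c σ a)
  | c, σ, .sect a => .sect (Tm.subst c σ a)
  | c, σ, .unsect a => .unsect (Tm.subst c σ a)

/-- Rename the free variables of a term along `f`. -/
def Tm.rename (f : ℕ → ℕ) : Tm → Tm
  | .bvar n => .bvar (f n)
  | .lam p t => .lam p (t.rename fun n => if n < p.size then n else f (n - p.size) + p.size)
  | .app a b => .app (a.rename f) (b.rename f)
  | .tens a b => .tens (a.rename f) (b.rename f)
  | .bang a => .bang (a.rename f)
  | .unbang a => .unbang (a.rename f)
  | .sect a => .sect (a.rename f)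
  | .unsect a => .unsect (a.rename f)

/-- Matching a term against a pattern: `Pat.matchTm p N = some [M₁,…,M_m]` when `N` is a
tensor `M₁ ⊗ … ⊗ M_m` of the shape `p` (the leftmost component first). -/
def Pat.matchTm : Pat → Tm → Option (List Tm)
  | .pvar, t => some [t]
  | .ptens p q, .tens a b => do
      let l ← p.matchTm a
      let r ← q.matchTm b
      pure (l ++ r)
  | .ptens _ _, _ => none

/-- The rewriting relation `⇝` of the concrete syntax: the contextual closure of
`(λx₁⊗…⊗x_m.M)(M₁⊗…⊗M_m) ▷ M[M₁/x₁,…,M_m/x_m]`, `!̄!M ▷ M` and `§̄§M ▷ M`. -/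
inductive Step : Tm → Tm → Prop
  | beta {p : Pat} {M N : Tm} {σ : List Tm} :
      Pat.matchTm p N = some σ → Step (.app (.lam p M) N) (Tm.subst 0 σ M)
  | bangRed {M : Tm} : Step (.unbang (.bang M)) M
  | sectRed {M : Tm} : Step (.unsect (.sect M)) M
  | appL {a a' b : Tm} : Step a a' → Step (.app a b) (.app a' b)
  | appR {a b b' : Tm} : Step b b' → Step (.app a b) (.app a b')
  | lamC {p : Pat} {t t' : Tm} : Step t t' → Step (.lam p t) (.lam p t')
  | tensL {a a' b : Tm} : Step a a' → Step (.tens a b) (.tens a' b)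
  | tensR {a b b' : Tm} : Step b b' → Step (.tens a b) (.tens a b')
  | bangC {t t' : Tm} : Step t t' → Step (.bang t) (.bang t')
  | unbangC {t t' : Tm} : Step t t' → Step (.unbang t) (.unbang t')
  | sectC {t t' : Tm} : Step t t' → Step (.sect t) (.sect t')
  | unsectC {t t' : Tm} : Step t t' → Step (.unsect t) (.unsect t')

/-- `⇝*`, the reflexive and transitive closure of `⇝`. -/
def Steps : Tm → Tm → Prop := Relation.ReflTransGen Step

/-- `PatTy p A Ts`: the pattern `p` decomposes the (tensor) formula `A`, its variables
receiving, from left to right, the types in `Ts`. -/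
inductive PatTy : Pat → Fm → List Fm → Prop
  | pvar (A : Fm) : PatTy .pvar A [A]
  | ptens {p q : Pat} {A B : Fm} {Ts Us : List Fm} :
      PatTy p A Ts → PatTy q B Us → PatTy (.ptens p q) (.tens A B) (Ts ++ Us)

/-- The type assignment of ILAL, decorating the sequent calculus of Intuitionistic Light
Affine Logic with the terms of the concrete syntax `Λ`.  The context is a list of
formulas, the `i`-th entry typing the free variable `i`.  The rules are: axiom, cut (by
substitution), exchange, unconstrained weakening, contraction (identifying two variables
of type `!A`), `⊸`-left (by application) and `⊸`-right (by pattern abstraction, which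
also accounts for `⊗`-left), `⊗`-right, the `!`-rule with at most one assumption (boxing
the term with `!` and marking the assumption with `!̄`), the `§`-rule (boxing with `§`,
marking `!`-assumptions with `!̄` and `§`-assumptions with `§̄`), and `∀`-left/right with
no term constructor. -/
inductive Typed : List Fm → Tm → Fm → Prop
  | ax (A : Fm) : Typed [A] (.bvar 0) A
  | cut {Γ Δ : List Fm} {M N : Tm} {A B : Fm} :
      Typed Γ M A → Typed (A :: Δ) N B →
      Typed (Δ ++ Γ) (Tm.subst 0 [M.lift 0 Δ.length] N) B
  | exch {Γ₁ Γ₂ : List Fm} {A B C : Fm} {M : Tm} :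
      Typed (Γ₁ ++ A :: B :: Γ₂) M C →
      Typed (Γ₁ ++ B :: A :: Γ₂)
        (M.rename fun n =>
          if n = Γ₁.length then n + 1 else if n = Γ₁.length + 1 then n - 1 else n) C
  | weak {Γ : List Fm} {M : Tm} {B : Fm} (A : Fm) :
      Typed Γ M B → Typed (A :: Γ) (M.lift 0 1) B
  | contr {Γ : List Fm} {M : Tm} {A B : Fm} :
      Typed (.bang A :: .bang A :: Γ) M B →
      Typed (.bang A :: Γ) (M.rename fun n => if n ≤ 1 then 0 else n - 1) B
  | limpL {Γ Δ : List Fm} {M N : Tm} {A B C : Fm} :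
      Typed Γ M A → Typed (B :: Δ) N C →
      Typed (.limp A B :: Δ ++ Γ)
        (Tm.subst 0 [.app (.bvar 0) (M.lift 0 (Δ.length + 1))] (N.lift 1 1)) C
  | limpR {Γ : List Fm} {p : Pat} {A : Fm} {Ts : List Fm} {M : Tm} {B : Fm} :
      PatTy p A Ts → Typed (Ts ++ Γ) M B → Typed Γ (.lam p M) (.limp A B)
  | tensR {Γ Δ : List Fm} {M N : Tm} {A B : Fm} :
      Typed Γ M A → Typed Δ N B →
      Typed (Γ ++ Δ) (.tens M (N.lift 0 Γ.length)) (.tens A B)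
  | bangNil {M : Tm} {A : Fm} :
      Typed [] M A → Typed [] (.bang M) (.bang A)
  | bangOne {M : Tm} {A B : Fm} :
      Typed [B] M A →
      Typed [.bang B] (.bang (Tm.subst 0 [.unbang (.bvar 0)] M)) (.bang A)
  | sectRule {Δ Γ : List Fm} {M : Tm} {C : Fm} :
      Typed (Δ ++ Γ) M C →
      Typed (Δ.map Fm.bang ++ Γ.map Fm.sect)
        (.sect (Tm.subst 0
          (((List.range Δ.length).map fun i => .unbang (.bvar i)) ++
           ((List.range Γ.length).map fun i => .unsect (.bvar (Δ.length + i)))) M))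
        (.sect C)
  | allL {Γ : List Fm} {A B C : Fm} {M : Tm} :
      Typed (Fm.subst 0 B A :: Γ) M C → Typed (.all A :: Γ) M C
  | allR {Γ : List Fm} {M : Tm} {A : Fm} :
      Typed (Γ.map (Fm.lift 0)) M A → Typed Γ M (.all A)

/-- The type of the tally integers: `Int = ∀α.!(α⊸α)⊸§(α⊸α)`. -/
def IntF : Fm :=
  .all (.limp (.bang (.limp (.var 0) (.var 0))) (.sect (.limp (.var 0) (.var 0))))

/-- The body `!̄x(…(!̄x y)…)` with `n` occurrences of `!̄x` (here `y` is index `0` and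
`x` is index `1`). -/
def churchBody : ℕ → Tm
  | 0 => .bvar 0
  | n + 1 => .app (.unbang (.bvar 1)) (churchBody n)

/-- The tally numeral `n̄ = λx.§(λy.!̄x(…(!̄x y)…))` with `n` occurrences of `!̄x`
(in particular `0̄ = λx.§λy.y`). -/
def church (n : ℕ) : Tm := .lam .pvar (.sect (.lam .pvar (churchBody n)))

/-- The iterator `iter = λx.λy.λz.§(§̄(x y) §̄z)`. -/
def iterT : Tm :=
  .lam .pvar (.lam .pvar (.lam .pvar (.sect
    (.app (.unsect (.app (.bvar 2) (.bvar 1))) (.unsect (.bvar 0))))))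

/-- The sum `sum = λw.λz.λx.§(λy.§̄(w x)(§̄(z x) y))`. -/
def sumT : Tm :=
  .lam .pvar (.lam .pvar (.lam .pvar (.sect (.lam .pvar
    (.app (.unsect (.app (.bvar 3) (.bvar 1)))
      (.app (.unsect (.app (.bvar 2) (.bvar 1))) (.bvar 0)))))))

/-- The multiplication `mult = λx.λy.iter x !(λw.sum !̄y w) §0̄`. -/
def multT : Tm :=
  .lam .pvar (.lam .pvar
    (.app (.app (.app iterT (.bvar 1))
        (.bang (.lam .pvar (.app (.app sumT (.unbang (.bvar 1))) (.bvar 0)))))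
      (.sect (church 0))))

/-! ### Typing derivations -/

/-- The instance of the matrix of `Int` at the formula `A`: `!(A⊸A)⊸§(A⊸A)`. -/
def IntAt (A : Fm) : Fm := .limp (.bang (.limp A A)) (.sect (.limp A A))

/-- `f : A⊸B, a : A ⊢ f a : B`. -/
theorem typed_app (A B : Fm) : Typed [.limp A B, A] (.app (.bvar 0) (.bvar 1)) B :=
  .limpL (Δ := []) (.ax A) (.ax B)

/-- Abstraction over a single variable. -/
theorem typed_lam {Γ : List Fm} {M : Tm} {A B : Fm} (h : Typed (A :: Γ) M B) :
    Typed Γ (.lam .pvar M) (.limp A B) :=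
  .limpR (.pvar A) h

/-- `u : A⊸A, v : A⊸A ⊢ λy.u (v y) : A⊸A`. -/
theorem typed_comp (A : Fm) :
    Typed [.limp A A, .limp A A]
      (.lam .pvar (.app (.bvar 1) (.app (.bvar 2) (.bvar 0)))) (.limp A A) := by
  have h1 : Typed [.limp A A, .limp A A, A]
      (.app (.bvar 0) (.app (.bvar 1) (.bvar 2))) A :=
    .limpL (Δ := []) (typed_app A A) (.ax A)
  have h2 : Typed [.limp A A, A, .limp A A]
      (.app (.bvar 0) (.app (.bvar 2) (.bvar 1))) A :=
    .exch (Γ₁ := [.limp A A]) (Γ₂ := []) h1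
  have h3 : Typed [A, .limp A A, .limp A A]
      (.app (.bvar 1) (.app (.bvar 2) (.bvar 0))) A :=
    .exch (Γ₁ := []) h2
  exact typed_lam h3

/-- The body `§(λy.§̄(w x)(§̄(z x) y))` of `sum`, where `w`, `z` and the two occurrences of `x` are
the variables `w`, `z`, `x₁`, `x₂`. -/
def sumBody (w z x₁ x₂ : ℕ) : Tm :=
  .sect (.lam .pvar
    (.app (.unsect (.app (.bvar (w + 1)) (.bvar (x₁ + 1))))
      (.app (.unsect (.app (.bvar (z + 1)) (.bvar (x₂ + 1)))) (.bvar 0))))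

theorem typed_sum : Typed [] sumT (.limp IntF (.limp IntF IntF)) := by
  let a : Fm := .var 0
  let e : Fm := .limp a a
  have h1 : Typed [.sect e, .sect e] (.sect (.lam .pvar
      (.app (.unsect (.bvar 1)) (.app (.unsect (.bvar 2)) (.bvar 0))))) (.sect e) :=
    .sectRule (Δ := []) (Γ := [e, e]) (typed_comp a)
  have h2 : Typed [IntAt a, .sect e, .bang e] (.sect (.lam .pvar
      (.app (.unsect (.app (.bvar 1) (.bvar 3)))
        (.app (.unsect (.bvar 2)) (.bvar 0))))) (.sect e) :=
    .limpL (Δ := [.sect e]) (.ax (.bang e)) h1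
  have h3 : Typed [.sect e, IntAt a, .bang e] (.sect (.lam .pvar
      (.app (.unsect (.app (.bvar 2) (.bvar 3)))
        (.app (.unsect (.bvar 1)) (.bvar 0))))) (.sect e) :=
    .exch (Γ₁ := []) h2
  have h4 : Typed [IntAt a, IntAt a, .bang e, .bang e] (sumBody 1 0 2 3) (.sect e) :=
    .limpL (Δ := [IntAt a, .bang e]) (.ax (.bang e)) h3
  have h5 : Typed [IntF, IntAt a, .bang e, .bang e] (sumBody 1 0 2 3) (.sect e) :=
    .allL (B := a) h4
  have h6 : Typed [IntAt a, IntF, .bang e, .bang e] (sumBody 0 1 2 3) (.sect e) :=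
    .exch (Γ₁ := []) h5
  have h7 : Typed [IntF, IntF, .bang e, .bang e] (sumBody 0 1 2 3) (.sect e) :=
    .allL (B := a) h6
  have h8 : Typed [IntF, .bang e, IntF, .bang e] (sumBody 0 2 1 3) (.sect e) :=
    .exch (Γ₁ := [IntF]) h7
  have h9 : Typed [.bang e, IntF, IntF, .bang e] (sumBody 1 2 0 3) (.sect e) :=
    .exch (Γ₁ := []) h8
  have h10 : Typed [.bang e, IntF, .bang e, IntF] (sumBody 1 3 0 2) (.sect e) :=
    .exch (Γ₁ := [.bang e, IntF]) (Γ₂ := []) h9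
  have h11 : Typed [.bang e, .bang e, IntF, IntF] (sumBody 2 3 0 1) (.sect e) :=
    .exch (Γ₁ := [.bang e]) h10
  have h12 : Typed [.bang e, IntF, IntF] (sumBody 1 2 0 0) (.sect e) :=
    .contr h11
  -- `Int` is closed, hence unaffected by the lifting in `∀`-right.
  have h13 : Typed [IntF, IntF] (.lam .pvar (sumBody 1 2 0 0)) IntF :=
    .allR (typed_lam h12)
  have h14 : Typed [IntF, IntF] (.lam .pvar (sumBody 2 1 0 0)) IntF :=
    .exch (Γ₁ := []) (Γ₂ := []) h13
  exact typed_lam (typed_lam h14)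

theorem typed_iter (A : Fm) (hA : Fm.subst 0 A (IntAt (.var 0)) = IntAt A) :
    Typed [] iterT (.limp IntF (.limp (.bang (.limp A A)) (.limp (.sect A) (.sect A)))) := by
  have h1 : Typed [.sect (.limp A A), .sect A]
      (.sect (.app (.unsect (.bvar 0)) (.unsect (.bvar 1)))) (.sect A) :=
    .sectRule (Δ := []) (Γ := [.limp A A, A]) (typed_app A A)
  have h2 : Typed [IntAt A, .sect A, .bang (.limp A A)]
      (.sect (.app (.unsect (.app (.bvar 0) (.bvar 2))) (.unsect (.bvar 1)))) (.sect A) :=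
    .limpL (Δ := [.sect A]) (.ax (.bang (.limp A A))) h1
  have h3 : Typed [IntF, .sect A, .bang (.limp A A)]
      (.sect (.app (.unsect (.app (.bvar 0) (.bvar 2))) (.unsect (.bvar 1)))) (.sect A) :=
    .allL (A := IntAt (.var 0)) (B := A) (hA ▸ h2)
  have h4 : Typed [.sect A, IntF, .bang (.limp A A)]
      (.sect (.app (.unsect (.app (.bvar 1) (.bvar 2))) (.unsect (.bvar 0)))) (.sect A) :=
    .exch (Γ₁ := []) h3
  have h5 : Typed [.sect A, .bang (.limp A A), IntF]
      (.sect (.app (.unsect (.app (.bvar 2) (.bvar 1))) (.unsect (.bvar 0)))) (.sect A) :=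
    .exch (Γ₁ := [.sect A]) (Γ₂ := []) h4
  exact typed_lam (typed_lam (typed_lam h5))

theorem typed_zero : Typed [] (church 0) IntF := by
  have h1 : Typed [] (.lam .pvar (.bvar 0)) (.limp (.var 0) (.var 0)) := typed_lam (.ax _)
  have h2 : Typed [] (.sect (.lam .pvar (.bvar 0))) (.sect (.limp (.var 0) (.var 0))) :=
    .sectRule (Δ := []) (Γ := []) h1
  exact .allR (typed_lam (.weak _ h2))

/-- `y : !Int ⊢ !(λw.sum !̄y w) : !(Int⊸Int)`. -/
theorem typed_stepFn :
    Typed [.bang IntF]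
      (.bang (.lam .pvar (.app (.app sumT (.unbang (.bvar 1))) (.bvar 0))))
      (.bang (.limp IntF IntF)) := by
  have h1 : Typed [.limp IntF (.limp IntF IntF), IntF, IntF]
      (.app (.app (.bvar 0) (.bvar 2)) (.bvar 1)) IntF :=
    .limpL (Δ := [IntF]) (.ax IntF) (typed_app IntF IntF)
  have h2 : Typed [IntF, IntF] (.app (.app sumT (.bvar 1)) (.bvar 0)) IntF :=
    .cut (Δ := [IntF, IntF]) typed_sum h1
  exact .bangOne (typed_lam h2)

theorem typed_mult : Typed [] multT (.limp IntF (.limp (.bang IntF) (.sect IntF))) := by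
  let B : Fm := .bang (.limp IntF IntF)
  let C : Fm := .sect IntF
  have h1 : Typed [.limp B (.limp C C), C, B]
      (.app (.app (.bvar 0) (.bvar 2)) (.bvar 1)) C :=
    .limpL (Δ := [C]) (.ax B) (typed_app C C)
  have h2 : Typed [.limp IntF (.limp B (.limp C C)), C, B, IntF]
      (.app (.app (.app (.bvar 0) (.bvar 3)) (.bvar 2)) (.bvar 1)) C :=
    .limpL (Δ := [C, B]) (.ax IntF) h1
  have h3 : Typed [C, B, IntF] (.app (.app (.app iterT (.bvar 2)) (.bvar 1)) (.bvar 0)) C :=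
    .cut (Δ := [C, B, IntF]) (typed_iter IntF rfl) h2
  have h0 : Typed [] (.sect (church 0)) C := .sectRule (Δ := []) (Γ := []) typed_zero
  have h4 : Typed [B, IntF] (.app (.app (.app iterT (.bvar 1)) (.bvar 0)) (.sect (church 0))) C :=
    .cut (Δ := [B, IntF]) h0 h3
  have h5 : Typed [IntF, .bang IntF]
      (.app (.app (.app iterT (.bvar 0))
        (.bang (.lam .pvar (.app (.app sumT (.unbang (.bvar 2))) (.bvar 0)))))
        (.sect (church 0))) C :=
    .cut (Δ := [IntF]) typed_stepFn h4
  have h6 : Typed [.bang IntF, IntF]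
      (.app (.app (.app iterT (.bvar 1))
        (.bang (.lam .pvar (.app (.app sumT (.unbang (.bvar 1))) (.bvar 0)))))
        (.sect (church 0))) C :=
    .exch (Γ₁ := []) (Γ₂ := []) h5
  exact typed_lam (typed_lam h6)

/-! ### Iterated application and numerals -/

/-- The iterated application `f (… (f b))` with `n` occurrences of `f`. -/
def appN (f : Tm) : ℕ → Tm → Tm
  | 0, b => b
  | n + 1, b => .app f (appN f n b)

theorem churchBody_eq (n : ℕ) : churchBody n = appN (.unbang (.bvar 1)) n (.bvar 0) := by
  induction n with
  | zero => rfl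
  | succ n ih => simp [churchBody, appN, ih]

theorem appN_add (f b : Tm) (n k : ℕ) : appN f n (appN f k b) = appN f (n + k) b := by
  induction n with
  | zero => simp [appN]
  | succ n ih => rw [Nat.succ_add]; simp [appN, ih]

theorem lift_appN (c d : ℕ) (f b : Tm) (n : ℕ) :
    (appN f n b).lift c d = appN (f.lift c d) n (b.lift c d) := by
  induction n with
  | zero => rfl
  | succ n ih => simp [appN, Tm.lift, ih]

theorem subst_appN (c : ℕ) (σ : List Tm) (f b : Tm) (n : ℕ) :
    Tm.subst c σ (appN f n b) = appN (Tm.subst c σ f) n (Tm.subst c σ b) := by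
  induction n with
  | zero => rfl
  | succ n ih => simp [appN, Tm.subst, ih]

theorem lift_church (c d n : ℕ) : (church n).lift c d = church n := by
  simp [church, churchBody_eq, Tm.lift, lift_appN, Pat.size]

theorem subst_church (c : ℕ) (σ : List Tm) (n : ℕ) : Tm.subst c σ (church n) = church n := by
  simp [church, churchBody_eq, Tm.subst, subst_appN, Pat.size]

/-! ### Reductions -/

theorem Steps.lift_ctx {a b : Tm} (f : Tm → Tm) (hf : ∀ x y, Step x y → Step (f x) (f y))
    (h : Steps a b) : Steps (f a) (f b) :=
  Relation.ReflTransGen.lift f hf _ _ h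

theorem Steps.app {a a' b b' : Tm} (ha : Steps a a') (hb : Steps b b') :
    Steps (.app a b) (.app a' b') :=
  (Steps.lift_ctx (Tm.app · b) (fun _ _ => .appL) ha).trans
    (Steps.lift_ctx (Tm.app a' ·) (fun _ _ => .appR) hb)

theorem Steps.lam {p : Pat} {a a' : Tm} (h : Steps a a') : Steps (.lam p a) (.lam p a') :=
  Steps.lift_ctx (Tm.lam p) (fun _ _ => .lamC) h

theorem Steps.sect {a a' : Tm} (h : Steps a a') : Steps (.sect a) (.sect a') :=
  Steps.lift_ctx Tm.sect (fun _ _ => .sectC) h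

theorem Steps.unsect {a a' : Tm} (h : Steps a a') : Steps (.unsect a) (.unsect a') :=
  Steps.lift_ctx Tm.unsect (fun _ _ => .unsectC) h

theorem steps_beta {M N R : Tm} (h : Tm.subst 0 [N] M = R) :
    Steps (.app (.lam .pvar M) N) R :=
  h ▸ .single (.beta rfl)

/-- `§̄(n̄ N) ⇝* λy.!̄N(…(!̄N y)…)`. -/
theorem unsect_church_steps (n : ℕ) (N : Tm) :
    Steps (.unsect (.app (church n) N))
      (.lam .pvar (appN (.unbang (N.lift 0 1)) n (.bvar 0))) := by
  refine (Steps.unsect (steps_beta ?_)).trans (.single .sectRed)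
  simp [churchBody_eq, Tm.subst, subst_appN, Pat.size]

theorem sum_steps (n k : ℕ) :
    Steps (.app (.app sumT (church n)) (church k)) (church (n + k)) := by
  have h1 : Steps (.app (.app sumT (church n)) (church k))
      (.lam .pvar (.sect (.lam .pvar
        (.app (.unsect (.app (church n) (.bvar 1)))
          (.app (.unsect (.app (church k) (.bvar 1))) (.bvar 0)))))) := by
    refine (Steps.app (steps_beta rfl) .refl).trans (steps_beta ?_)
    simp [Tm.subst, Pat.size, lift_church, subst_church]
  refine h1.trans (Steps.lam (Steps.sect (Steps.lam ?_)))
  refine (Steps.app (unsect_church_steps n _)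
    (Steps.app (unsect_church_steps k _) .refl)).trans ?_
  refine (Steps.app .refl (steps_beta rfl)).trans (steps_beta ?_)
  simp [Tm.subst, Tm.lift, subst_appN, lift_appN, churchBody_eq, appN_add]

/-- The closed function `λw.sum !̄!n̄ w` that `mult m̄ !n̄` iterates. -/
def stepFn (n : ℕ) : Tm :=
  .lam .pvar (.app (.app sumT (.unbang (.bang (church n)))) (.bvar 0))

theorem stepFn_steps (n k : ℕ) :
    Steps (.app (.unbang (.bang (stepFn n))) (church k)) (church (n + k)) := by
  have h1 : Steps (.app (stepFn n) (church k))
      (.app (.app sumT (.unbang (.bang (church n)))) (church k)) := by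
    refine steps_beta ?_
    simp [Tm.subst, sumT, Pat.size, lift_church, subst_church]
  refine (Steps.app (.single .bangRed) .refl).trans (h1.trans ?_)
  exact (Steps.app (Steps.app .refl (.single .bangRed)) .refl).trans (sum_steps n k)

theorem appN_stepFn_steps (m n : ℕ) :
    Steps (appN (.unbang (.bang (stepFn n))) m (church 0)) (church (m * n)) := by
  induction m with
  | zero => rw [Nat.zero_mul]; exact .refl
  | succ m ih =>
    rw [Nat.succ_mul, Nat.add_comm (m * n)]
    exact (Steps.app .refl ih).trans (stepFn_steps n (m * n))

theorem lift_stepFn (c d n : ℕ) : (stepFn n).lift c d = stepFn n := by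
  simp [stepFn, sumT, Tm.lift, Pat.size, lift_church]

theorem subst_stepFn (c : ℕ) (σ : List Tm) (n : ℕ) : Tm.subst c σ (stepFn n) = stepFn n := by
  simp [stepFn, sumT, Tm.subst, Pat.size, subst_church]

theorem mult_unfold (m n : ℕ) :
    Steps (.app (.app multT (church m)) (.bang (church n)))
      (.sect (appN (.unbang (.bang (stepFn n))) m (church 0))) := by
  have h1 : Steps (.app (.app multT (church m)) (.bang (church n)))
      (.app (.app (.app iterT (church m)) (.bang (stepFn n))) (.sect (church 0))) := by
    refine (Steps.app (steps_beta rfl) .refl).trans (steps_beta ?_)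
    simp [Tm.subst, Tm.lift, Pat.size, lift_church, subst_church, stepFn, sumT, iterT]
  have h2 : Steps (.app (.app (.app iterT (church m)) (.bang (stepFn n))) (.sect (church 0)))
      (.sect (.app (.unsect (.app (church m) (.bang (stepFn n))))
        (.unsect (.sect (church 0))))) := by
    refine (Steps.app (Steps.app (steps_beta rfl) .refl) .refl).trans ?_
    refine (Steps.app (steps_beta rfl) .refl).trans (steps_beta ?_)
    simp [Tm.subst, Tm.lift, Pat.size, lift_church, subst_church, lift_stepFn, subst_stepFn]
  refine h1.trans (h2.trans (Steps.sect ?_))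
  refine (Steps.app (unsect_church_steps m _) (.single .sectRed)).trans (steps_beta ?_)
  simp [Tm.subst, Tm.lift, subst_appN, lift_church, lift_stepFn, subst_stepFn]

/-- `mult` is typable as `⊢ mult : Int ⊸ !Int ⊸ §Int`, and for all natural numbers `m`
and `n`, `mult m̄ !n̄ ⇝* §(m·n)̄`. -/
theorem mult_typable_and_correct :
    Typed [] multT (.limp IntF (.limp (.bang IntF) (.sect IntF))) ∧
    ∀ m n : ℕ,
      Steps (.app (.app multT (church m)) (.bang (church n))) (.sect (church (m * n))) :=
  ⟨typed_mult, fun m n => (mult_unfold m n).trans (Steps.sect (appN_stepFn_steps m n))⟩
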